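/- Let k, n, m be positive integers, let π = (P_1,...,P_m) be a partition of [n], and let s = (s_1,...,s_m) be a vector of positive integers with s_i ≤ |P_i| for all i and k ≤ s_1 + ... + s_m. Then χ(KG^2(π; s; k)) = max{1, n − M_{2,π} + 1}. -/

import Mathlib

open Finset

/-- A proper `t`-coloring of the Kneser hypergraph `KG^r(F)`: vertices are the members of `F`,
colors are taken in `{1,...,t}`, and no set of `r` pairwise disjoint members of `F`
(an edge) is monochromatic. -/
def IsKneserColoring (n r t : ℕ) (F : Finset (Finset (Fin n)))
    (c : Finset (Fin n) → ℕ) : Prop :=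
  (∀ A ∈ F, c A ∈ Finset.Icc 1 t) ∧
    ∀ E : Finset (Finset (Fin n)), E ⊆ F → E.card = r →
      ((E : Set (Finset (Fin n))).Pairwise fun A B => Disjoint A B) →
      ¬ ∃ i, ∀ A ∈ E, c A = i

/-- The chromatic number of the Kneser hypergraph `KG^r(F)`. -/
noncomputable def kneserChrom (n r : ℕ) (F : Finset (Finset (Fin n))) : ℕ :=
  sInf {t | ∃ c, IsKneserColoring n r t F c}

/-- `P` is a partition of `[n]` (identified with `Fin n`) into `m` blocks. -/
def IsPartition (n m : ℕ) (P : Fin m → Finset (Fin n)) : Prop :=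
  (∀ i, (P i).Nonempty) ∧ (∀ i j, i ≠ j → Disjoint (P i) (P j)) ∧
    ∀ a : Fin n, ∃ i, a ∈ P i

open Classical in
/-- The vertex set of the multiple Kneser hypergraph `KG^r(π; s; k)`:
all `k`-subsets `A` of `[n]` with `|A ∩ P i| ≤ s i` for all `i`. -/
noncomputable def multiKneserVerts (n m k : ℕ) (P : Fin m → Finset (Fin n))
    (s : Fin m → ℕ) : Finset (Finset (Fin n)) :=
  Finset.univ.filter fun A => A.card = k ∧ ∀ i, (A ∩ P i).card ≤ s i

/-- `f_{r,π}(P i) = r * s i` if `|P i| ≥ r * s i`, and `|P i|` otherwise. -/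
def frpi (n m r : ℕ) (P : Fin m → Finset (Fin n)) (s : Fin m → ℕ) (i : Fin m) : ℕ :=
  if r * s i ≤ (P i).card then r * s i else (P i).card

/-- `M_{r,π}`: the maximum, over all subsets `S ⊆ [m]` with
`∑_{i ∈ S} f_{r,π}(P i) ≤ rk - 1`, of `rk - 1 + ∑_{i ∈ S} (|P i| - f_{r,π}(P i))`. -/
noncomputable def Mrpi (n m r k : ℕ) (P : Fin m → Finset (Fin n)) (s : Fin m → ℕ) : ℕ :=
  sSup {v | ∃ S : Finset (Fin m), (∑ i ∈ S, frpi n m r P s i) ≤ r * k - 1 ∧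
    v = r * k - 1 + ∑ i ∈ S, ((P i).card - frpi n m r P s i)}

/-- `1` if the parities of the list alternate, starting with `b`; otherwise `0`. -/
def altL : Bool → List ℕ → ZMod 2
  | _, [] => 1
  | b, x :: l => if decide (x % 2 = 1) = b then altL (!b) l else 0

/-- The boundary (deletion) operator on functions of multisets. -/
def bdF (φ : Multiset ℕ → ZMod 2) (T : Multiset ℕ) : ZMod 2 :=
  (T.map (fun x => φ (T.erase x))).sum

/-- Flip of a label. -/
def flipC (c : ℕ) : ℕ := 2 * (c / 2) + (1 - c % 2)

def altM (b : Bool) (T : Multiset ℕ) : ZMod 2 := altL b (T.sort (· ≤ ·))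

def NonComp (T : Multiset ℕ) : Prop := ∀ x ∈ T, ∀ y ∈ T, x / 2 = y / 2 → x = y

lemma zmod2_add_self (x : ZMod 2) : x + x = 0 := CharTwo.add_self_eq_zero x

lemma altL_bd (l : List ℕ) (hl : l.Pairwise (· ≤ ·)) (b : Bool) :
    (l.map (fun x => altL b (l.erase x))).sum = altL b l + altL (!b) l := by
  induction l generalizing b with
  | nil => simp [altL]; exact (zmod2_add_self 1).symm
  | cons x l ih =>
    have hl' := List.pairwise_cons.1 hl
    have key : ∀ y ∈ l, (x :: l).erase y = x :: l.erase y := by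
      intro y hy
      by_cases hxy : x = y
      · subst hxy
        rw [List.erase_cons_head]
        cases l with
        | nil => simp at hy
        | cons z l =>
          have h1 := hl'.1 z (by simp)
          have h2 : z ≤ x := by
            rcases List.mem_cons.1 hy with h | h
            · exact h.ge
            · exact (List.pairwise_cons.1 hl'.2).1 x h
          have : x = z := le_antisymm h1 h2
          subst this
          simp
      · rw [List.erase_cons_tail]
        simpa using hxy
    rw [List.map_cons, List.sum_cons, List.erase_cons_head]
    rw [List.map_congr_left (g := fun y => altL b (x :: l.erase y))
      (fun y hy => by simp only [key y hy])]
    by_cases hb : decide (x % 2 = 1) = b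
    · have h1 : ∀ l', altL b (x :: l') = altL (!b) l' := fun l' => by simp only [altL, if_pos hb]
      have h2 : ∀ l', altL (!b) (x :: l') = 0 := fun l' => by
        simp only [altL]; rw [if_neg]; rw [hb]; cases b <;> simp
      simp only [h1, h2]
      rw [ih hl'.2, Bool.not_not]
      have := zmod2_add_self (altL b l)
      linear_combination this
    · have h1 : ∀ l', altL b (x :: l') = 0 := fun l' => by simp only [altL, if_neg hb]
      have h2 : altL (!b) (x :: l) = altL b l := by
        simp only [altL]; rw [if_pos, Bool.not_not]; revert hb; cases b <;> cases decide (x % 2 = 1) <;> simp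
      simp only [h1, h2]
      simp

lemma altM_bd (b : Bool) (T : Multiset ℕ) : bdF (altM b) T = altM b T + altM (!b) T := by
  have h := altL_bd (T.sort (· ≤ ·)) (Multiset.pairwise_sort T _) b
  unfold altM
  rw [← h]
  unfold bdF
  have e : T = ((T.sort (· ≤ ·) : List ℕ) : Multiset ℕ) := (Multiset.sort_eq T _).symm
  have : ∀ x, (T.erase x).sort (· ≤ ·) = (T.sort (· ≤ ·)).erase x := by
    intro x
    apply List.Perm.eq_of_pairwise' (r := (· ≤ ·)) (Multiset.pairwise_sort _ _)
    · exact (Multiset.pairwise_sort T _).sublist List.erase_sublist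
    · rw [← Multiset.coe_eq_coe, Multiset.sort_eq, ← Multiset.coe_erase, Multiset.sort_eq]
  simp only [this]
  generalize hg : (fun x => altL b ((T.sort (· ≤ ·)).erase x)) = g
  conv_lhs => rw [e]
  rw [Multiset.map_coe, Multiset.sum_coe]

lemma flipC_mod (c : ℕ) : decide (flipC c % 2 = 1) = !decide (c % 2 = 1) := by
  have : flipC c % 2 = 1 ↔ ¬ (c % 2 = 1) := by unfold flipC; omega
  simp only [this, decide_not]

lemma altL_flip (l : List ℕ) (b : Bool) : altL b (l.map flipC) = altL (!b) l := by
  induction l generalizing b with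
  | nil => simp [altL]
  | cons x l ih =>
    simp only [List.map_cons, altL, flipC_mod, ih]
    cases b <;> cases decide (x % 2 = 1) <;> simp

lemma altM_flip (T : Multiset ℕ) (hT : NonComp T) (b : Bool) :
    altM b (T.map flipC) = altM (!b) T := by
  unfold altM
  rw [← altL_flip]
  congr 1
  apply List.Perm.eq_of_pairwise' (r := (· ≤ ·)) (Multiset.pairwise_sort _ _)
  · rw [List.pairwise_map]
    refine (Multiset.pairwise_sort T (· ≤ ·)).imp_of_mem ?_
    intro x y hx hy hxy
    have := hT x (by simpa using hx) y (by simpa using hy)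
    unfold flipC; omega
  · rw [← Multiset.coe_eq_coe, Multiset.sort_eq, ← Multiset.map_coe, Multiset.sort_eq]

lemma altL_strict (l : List ℕ) (hl : l.Pairwise (· ≤ ·))
    (hc : ∀ x ∈ l, ∀ y ∈ l, x / 2 = y / 2 → x = y) (b : Bool) (h : altL b l ≠ 0) :
    l.Pairwise (fun x y => x / 2 < y / 2) := by
  induction l generalizing b with
  | nil => simp
  | cons x l ih =>
    have hl' := List.pairwise_cons.1 hl
    have hb : decide (x % 2 = 1) = b := by
      by_contra hb; exact h (by simp only [altL, if_neg hb])
    have h1 : altL (!b) l ≠ 0 := by simpa only [altL, if_pos hb] using h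
    have ih' := ih hl'.2 (fun x hx y hy => hc x (by simp [hx]) y (by simp [hy])) _ h1
    refine List.pairwise_cons.2 ⟨?_, ih'⟩
    cases l with
    | nil => simp
    | cons z l =>
      have hz : decide (z % 2 = 1) = !b := by
        by_contra hb; exact h1 (by simp only [altL, if_neg hb])
      have hne : x ≠ z := by rintro rfl; rw [hb] at hz; cases b <;> simp at hz
      have hxz : x / 2 < z / 2 := by
        have := hl'.1 z (by simp)
        have := hc x (by simp) z (by simp)
        omega
      intro y hy
      rcases List.mem_cons.1 hy with rfl | hy
      · exact hxz
      · exact hxz.trans ((List.pairwise_cons.1 ih').1 y hy)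

lemma altM_card (T : Multiset ℕ) (hT : NonComp T) (b : Bool) (h : altM b T ≠ 0) (N : ℕ)
    (hN : ∀ x ∈ T, x / 2 < N) : T.card ≤ N := by
  have h1 := altL_strict (T.sort (· ≤ ·)) (Multiset.pairwise_sort T _)
    (fun x hx y hy => hT x (by simpa using hx) y (by simpa using hy)) b h
  have h2 : ((T.sort (· ≤ ·)).map (· / 2)).Nodup := by
    rw [List.nodup_iff_pairwise_ne, List.pairwise_map]
    exact h1.imp (fun h => h.ne)
  have h3 := List.toFinset_card_of_nodup h2
  have h4 : ((T.sort (· ≤ ·)).map (· / 2)).toFinset ⊆ Finset.range N := by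
    intro y hy
    simp only [List.mem_toFinset, List.mem_map, Multiset.mem_sort] at hy
    obtain ⟨x, hx, rfl⟩ := hy
    exact Finset.mem_range.2 (hN x hx)
  have h5 := Finset.card_le_card h4
  rw [h3] at h5
  simpa using h5

section Tucker
variable {α : Type*} [DecidableEq α]

/-- Sum of `φ` over the label multisets of maximal chains ending in the signed set `(U, V)`. -/
def chainSum (code : Finset α → Finset α → ℕ) :
    ℕ → (Multiset ℕ → ZMod 2) → Finset α → Finset α → ZMod 2
  | 0, φ, _, _ => φ 0
  | d + 1, φ, U, V => ∑ a ∈ U ∪ V,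
      chainSum code d (fun T => φ (code U V ::ₘ T)) (U.erase a) (V.erase a)

lemma chainSum_add (code : Finset α → Finset α → ℕ) (d : ℕ) (φ ψ : Multiset ℕ → ZMod 2)
    (U V : Finset α) : chainSum code d (fun T => φ T + ψ T) U V
      = chainSum code d φ U V + chainSum code d ψ U V := by
  induction d generalizing φ ψ U V with
  | zero => rfl
  | succ d ih => simp only [chainSum, ih, Finset.sum_add_distrib]

lemma bdF_cons (φ : Multiset ℕ → ZMod 2) (y : ℕ) (T : Multiset ℕ) :
    bdF φ (y ::ₘ T) = φ T + bdF (fun T => φ (y ::ₘ T)) T := by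
  unfold bdF
  rw [Multiset.map_cons, Multiset.sum_cons, Multiset.erase_cons_head]
  congr 2
  apply Multiset.map_congr rfl
  intro x hx
  by_cases h : x = y
  · subst h; simp only [Multiset.erase_cons_head, Multiset.cons_erase hx]
  · rw [Multiset.erase_cons_tail _ (Ne.symm h)]

lemma double_sum_zero (A : Finset α) (g : α → α → ZMod 2) (hg : ∀ a b, g a b = g b a) :
    ∑ a ∈ A, ∑ b ∈ A.erase a, g a b = 0 := by
  rw [Finset.sum_sigma']
  refine Finset.sum_involution (fun p _ => ⟨p.2, p.1⟩) ?_ ?_ ?_ ?_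
  · rintro ⟨a, b⟩ _; simp only; rw [hg a b]; exact zmod2_add_self _
  · rintro ⟨a, b⟩ h _ he
    simp only [Finset.mem_sigma, Finset.mem_erase] at h
    simp only [Sigma.mk.injEq] at he
    exact h.2.1 he.1
  · rintro ⟨a, b⟩ h
    simp only [Finset.mem_sigma, Finset.mem_erase] at h ⊢
    exact ⟨h.2.2, h.2.1.symm, h.1⟩
  · rintro ⟨a, b⟩ h; rfl

lemma chainSum_bd (code : Finset α → Finset α → ℕ) (d : ℕ) (φ : Multiset ℕ → ZMod 2)
    (U V : Finset α) : chainSum code (d + 1) (bdF φ) U V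
      = ∑ a ∈ U ∪ V, chainSum code d φ (U.erase a) (V.erase a) := by
  induction d generalizing φ U V with
  | zero => simp [chainSum, bdF]
  | succ d ih =>
    rw [chainSum]
    simp only [bdF_cons, chainSum_add, Finset.sum_add_distrib]
    simp only [ih]
    rw [add_eq_left]
    have : ∀ a, U.erase a ∪ V.erase a = (U ∪ V).erase a := fun a => by
      rw [Finset.erase_union_distrib]
    simp only [this]
    apply double_sum_zero (U ∪ V) (fun a b => chainSum code d
      (fun T => φ (code U V ::ₘ T)) ((U.erase a).erase b) ((V.erase a).erase b))
    intro a b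
    simp only [Finset.erase_right_comm]

lemma chainSum_congr (code : Finset α → Finset α → ℕ)
    (hcomp : ∀ U V U' V', Disjoint U' V' → U ⊆ U' → V ⊆ V' → (U ∪ V).Nonempty →
      code U V / 2 = code U' V' / 2 → code U V = code U' V')
    (d : ℕ) (φ ψ : Multiset ℕ → ZMod 2) (U V : Finset α) (hd : (U ∪ V).card = d)
    (hUV : Disjoint U V)
    (h : ∀ T : Multiset ℕ, T.card = d → NonComp T →
      (∀ x ∈ T, ∃ U' V', U' ⊆ U ∧ V' ⊆ V ∧ (U' ∪ V').Nonempty ∧ x = code U' V') → φ T = ψ T) :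
    chainSum code d φ U V = chainSum code d ψ U V := by
  induction d generalizing φ ψ U V with
  | zero => exact h 0 rfl (by simp [NonComp]) (by simp)
  | succ d ih =>
    simp only [chainSum]
    apply Finset.sum_congr rfl
    intro a ha
    apply ih
    · rw [← Finset.erase_union_distrib, Finset.card_erase_of_mem ha, hd]; rfl
    · exact hUV.mono (Finset.erase_subset _ _) (Finset.erase_subset _ _)
    · intro T hT hN hx
      have hx' : ∀ x ∈ T, ∃ U' V', U' ⊆ U ∧ V' ⊆ V ∧ (U' ∪ V').Nonempty ∧ x = code U' V' := by
        intro x hxT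
        obtain ⟨U', V', h1, h2, h3⟩ := hx x hxT
        exact ⟨U', V', h1.trans (Finset.erase_subset _ _), h2.trans (Finset.erase_subset _ _), h3⟩
      have hc : ∀ x ∈ T, x / 2 = code U V / 2 → x = code U V := by
        intro x hxT
        obtain ⟨U', V', h1, h2, h3, rfl⟩ := hx' x hxT
        exact hcomp _ _ _ _ hUV h1 h2 h3
      apply h
      · simp [hT]
      · intro x hx y hy hxy
        rcases Multiset.mem_cons.1 hx with rfl | hx <;> rcases Multiset.mem_cons.1 hy with rfl | hy
        · rfl
        · exact (hc y hy hxy.symm).symm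
        · exact hc x hx hxy
        · exact hN x hx y hy hxy
      · intro x hx
        rcases Multiset.mem_cons.1 hx with rfl | hx
        · exact ⟨U, V, subset_rfl, subset_rfl, ⟨a, ha⟩, rfl⟩
        · exact hx' x hx

lemma chainSum_swap (code : Finset α → Finset α → ℕ)
    (hanti : ∀ U V, Disjoint U V → (U ∪ V).Nonempty → code V U = flipC (code U V))
    (d : ℕ) (φ : Multiset ℕ → ZMod 2) (U V : Finset α) (hUV : Disjoint U V) :
    chainSum code d φ V U = chainSum code d (fun T => φ (T.map flipC)) U V := by
  induction d generalizing φ U V with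
  | zero => simp [chainSum]
  | succ d ih =>
    simp only [chainSum]
    rw [Finset.union_comm]
    apply Finset.sum_congr rfl
    intro a ha
    rw [ih _ _ _ (hUV.mono (Finset.erase_subset _ _) (Finset.erase_subset _ _))]
    simp only [Multiset.map_cons]
    rw [hanti U V hUV ⟨a, ha⟩]

lemma full_sum (code : Finset α → Finset α → ℕ)
    (hanti : ∀ U V, Disjoint U V → (U ∪ V).Nonempty → code V U = flipC (code U V))
    (hcomp : ∀ U V U' V', Disjoint U' V' → U ⊆ U' → V ⊆ V' → (U ∪ V).Nonempty →
      code U V / 2 = code U' V' / 2 → code U V = code U' V')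
    (A : Finset α) (b : Bool) :
    ∑ B ∈ A.powerset, chainSum code A.card (altM b) B (A \ B) = 1 := by
  induction A using Finset.induction_on with
  | empty => simp [chainSum, altM, altL]
  | insert d A hd ih =>
    rw [Finset.sum_powerset_insert hd, Finset.card_insert_of_notMem hd]
    have e1 : ∑ B ∈ A.powerset, chainSum code (A.card + 1) (altM b) B (insert d A \ B)
        = ∑ B ∈ A.powerset, chainSum code (A.card + 1) (altM (!b)) (insert d B)
          (insert d A \ insert d B) := by
      refine Finset.sum_bij' (fun B _ => A \ B) (fun B _ => A \ B) ?_ ?_ ?_ ?_ ?_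
      · intro B _; simp
      · intro B _; simp
      · intro B hB; simp at hB ⊢; exact hB
      · intro B hB; simp at hB ⊢; exact hB
      · intro B hB
        rw [Finset.mem_powerset] at hB
        have hdB : d ∉ B := fun h => hd (hB h)
        have h1 : insert d (A \ B) = insert d A \ B := by
          rw [Finset.insert_sdiff_of_notMem _ hdB]
        have h2 : insert d A \ insert d (A \ B) = B := by
          rw [h1, Finset.sdiff_sdiff_eq_self]; exact hB.trans (Finset.subset_insert _ _)
        rw [h2, h1]
        rw [chainSum_swap code hanti (A.card + 1) (altM b) _ _ Finset.sdiff_disjoint]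
        apply chainSum_congr code hcomp
        · rw [Finset.sdiff_union_of_subset (hB.trans (Finset.subset_insert _ _)),
            Finset.card_insert_of_notMem hd]
        · exact Finset.sdiff_disjoint
        · intro T _ hN _
          exact altM_flip T hN b
    rw [e1, ← Finset.sum_add_distrib, ← ih]
    have e2 : ∀ B ∈ A.powerset, chainSum code (A.card + 1) (altM (!b)) (insert d B)
          (insert d A \ insert d B) + chainSum code (A.card + 1) (altM b) (insert d B)
          (insert d A \ insert d B) = chainSum code A.card (altM b) B (A \ B) +
          ∑ a ∈ A, chainSum code A.card (altM b) (insert d (B.erase a)) ((A.erase a) \ (B.erase a)) := by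
      intro B hB
      rw [Finset.mem_powerset] at hB
      have hdB : d ∉ B := fun h => hd (hB h)
      rw [add_comm, ← chainSum_add]
      have : (fun T => altM b T + altM (!b) T) = bdF (altM b) := by
        funext T; exact (altM_bd b T).symm
      rw [this, chainSum_bd, Finset.union_sdiff_of_subset (Finset.insert_subset_insert _ hB),
        Finset.sum_insert hd]
      have h3 : insert d A \ insert d B = A \ B := by
        ext x; simp only [Finset.mem_sdiff, Finset.mem_insert]
        constructor
        · tauto
        · rintro ⟨h1, h2⟩
          exact ⟨Or.inr h1, fun h => h.elim (fun h => hd (h ▸ h1)) h2⟩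
      rw [h3, Finset.erase_insert hdB, Finset.erase_eq_of_notMem (s := A \ B) (a := d)
        (fun h => hd (Finset.mem_sdiff.1 h).1)]
      congr 1
      apply Finset.sum_congr rfl
      intro a ha
      have hda : d ≠ a := fun h => hd (h ▸ ha)
      congr 1
      · rw [Finset.erase_insert_of_ne hda]
      · ext x; simp only [Finset.mem_sdiff, Finset.mem_erase]; tauto
    rw [Finset.sum_congr rfl e2, Finset.sum_add_distrib, add_eq_left, Finset.sum_comm]
    apply Finset.sum_eq_zero
    intro a ha
    have hA : A = insert a (A.erase a) := (Finset.insert_erase ha).symm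
    have : A.powerset = (insert a (A.erase a)).powerset := by rw [← hA]
    rw [this, Finset.sum_powerset_insert (Finset.notMem_erase a A), ← Finset.sum_add_distrib]
    apply Finset.sum_eq_zero
    intro B hB
    rw [Finset.mem_powerset] at hB
    have haB : a ∉ B := fun h => Finset.notMem_erase a A (hB h)
    rw [Finset.erase_insert haB, Finset.erase_eq_of_notMem haB]
    exact zmod2_add_self _

/-- The octahedral Tucker lemma. -/
theorem octahedral_tucker [Fintype α] (N : ℕ) (lev : Finset α → Finset α → ℕ)
    (sg : Finset α → Finset α → Bool)
    (hlev : ∀ U V, Disjoint U V → (U ∪ V).Nonempty → lev U V < N)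
    (hlevs : ∀ U V, Disjoint U V → (U ∪ V).Nonempty → lev V U = lev U V)
    (hsgs : ∀ U V, Disjoint U V → (U ∪ V).Nonempty → sg V U = !sg U V)
    (hcomp : ∀ U V U' V', Disjoint U' V' → U ⊆ U' → V ⊆ V' → (U ∪ V).Nonempty →
      lev U V = lev U' V' → sg U V = sg U' V') : Fintype.card α ≤ N := by
  set code : Finset α → Finset α → ℕ := fun U V => 2 * lev U V + (sg U V).toNat with hcode
  have hdiv : ∀ U V, code U V / 2 = lev U V := by
    intro U V; simp only [hcode]; cases sg U V <;> simp <;> omega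
  have hanti : ∀ U V, Disjoint U V → (U ∪ V).Nonempty → code V U = flipC (code U V) := by
    intro U V h1 h2
    unfold flipC
    rw [hdiv]
    simp only [hcode, hlevs U V h1 h2, hsgs U V h1 h2]
    cases sg U V <;> simp
  have hcomp' : ∀ U V U' V', Disjoint U' V' → U ⊆ U' → V ⊆ V' → (U ∪ V).Nonempty →
      code U V / 2 = code U' V' / 2 → code U V = code U' V' := by
    intro U V U' V' h1 h2 h3 h4 h5
    rw [hdiv, hdiv] at h5
    simp only [hcode, h5, hcomp U V U' V' h1 h2 h3 h4 h5]
  by_contra hlt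
  have h := full_sum code hanti hcomp' Finset.univ true
  rw [Finset.sum_eq_zero] at h
  · exact zero_ne_one h
  intro B _
  have hz : ∀ d (U V : Finset α), chainSum code d (fun _ => 0) U V = 0 := by
    intro d
    induction d with
    | zero => intros; rfl
    | succ d ih => intro U V; simp only [chainSum, ih]; simp
  rw [← hz (Finset.univ : Finset α).card B (Finset.univ \ B)]
  apply chainSum_congr code hcomp'
  · rw [Finset.union_sdiff_of_subset (Finset.subset_univ _)]
  · exact Finset.disjoint_sdiff
  · intro T hT hN hx
    by_contra hne
    apply hlt
    rw [← Finset.card_univ, ← hT]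
    apply altM_card T hN true hne
    intro x hxT
    obtain ⟨U', V', h1, h2, h3, rfl⟩ := hx x hxT
    rw [hdiv]
    exact hlev _ _ (Finset.disjoint_sdiff.mono h1 h2) h3

end Tucker

section Kneser

/-- The clipped size. -/
def clipC {n m : ℕ} (P : Fin m → Finset (Fin n)) (s : Fin m → ℕ) (U : Finset (Fin n))
    (i : Fin m) : ℕ := min (U ∩ P i).card (s i)

def clipSum {n m : ℕ} (P : Fin m → Finset (Fin n)) (s : Fin m → ℕ) (U : Finset (Fin n)) : ℕ :=
  ∑ i, clipC P s U i

/-- The rank contribution of block `i`. -/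
def rk {n m : ℕ} (P : Fin m → Finset (Fin n)) (s : Fin m → ℕ) (U V : Finset (Fin n))
    (i : Fin m) : ℕ :=
  if s i ≤ (U ∩ P i).card ∧ s i ≤ (V ∩ P i).card then (U ∩ P i).card + (V ∩ P i).card
  else clipC P s U i + clipC P s V i

/-- The sign read off in block `i`. -/
def localSg {n m : ℕ} (P : Fin m → Finset (Fin n)) (s : Fin m → ℕ)
    (pick : Finset (Fin n) → Fin n) (i : Fin m) (U V : Finset (Fin n)) : Bool :=
  if s i ≤ (U ∩ P i).card ∧ (V ∩ P i).card < s i then true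
  else if (U ∩ P i).card < s i ∧ s i ≤ (V ∩ P i).card then false
  else decide (pick ((U ∪ V) ∩ P i) ∈ U)

variable {n m : ℕ} (P : Fin m → Finset (Fin n)) (s : Fin m → ℕ)

lemma card_inter_mono {U U' : Finset (Fin n)} (h : U ⊆ U') (i : Fin m) :
    (U ∩ P i).card ≤ (U' ∩ P i).card :=
  Finset.card_le_card (Finset.inter_subset_inter_right h)

lemma clipSum_mono {U U' : Finset (Fin n)} (h : U ⊆ U') : clipSum P s U ≤ clipSum P s U' := by
  apply Finset.sum_le_sum
  intro i _
  have := card_inter_mono P h i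
  unfold clipC; omega

lemma rk_mono {U U' V V' : Finset (Fin n)} (h : U ⊆ U') (h' : V ⊆ V') (i : Fin m) :
    rk P s U V i ≤ rk P s U' V' i := by
  have := card_inter_mono P h i
  have := card_inter_mono P h' i
  unfold rk clipC; split_ifs <;> omega

lemma rk_swap (U V : Finset (Fin n)) (i : Fin m) : rk P s V U i = rk P s U V i := by
  unfold rk; split_ifs <;> omega

lemma nonempty_of_rk {U V : Finset (Fin n)} {i : Fin m} (h : rk P s U V i ≠ 0) :
    ((U ∪ V) ∩ P i).Nonempty := by
  rw [← Finset.card_pos]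
  have h1 := card_inter_mono P (Finset.subset_union_left : U ⊆ U ∪ V) i
  have h2 := card_inter_mono P (Finset.subset_union_right : V ⊆ U ∪ V) i
  revert h
  unfold rk clipC; split_ifs <;> omega

lemma localSg_swap (pick : Finset (Fin n) → Fin n) (hpick : ∀ A, A.Nonempty → pick A ∈ A)
    {U V : Finset (Fin n)} {i : Fin m} (hd : Disjoint U V) (h : rk P s U V i ≠ 0) :
    localSg P s pick i V U = !localSg P s pick i U V := by
  have hm := hpick _ (nonempty_of_rk P s h)
  unfold localSg
  rw [Finset.union_comm V U]
  generalize pick ((U ∪ V) ∩ P i) = x at hm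
  have hx : x ∈ V ↔ ¬ x ∈ U := by
    have h1 := (Finset.mem_inter.1 hm).1
    rw [Finset.mem_union] at h1
    have := fun h : x ∈ U => Finset.disjoint_left.1 hd h
    tauto
  split_ifs <;> first | omega | simp [hx]

lemma localSg_mono (pick : Finset (Fin n) → Fin n) (hpick : ∀ A, A.Nonempty → pick A ∈ A)
    {U V U' V' : Finset (Fin n)} {i : Fin m} (hU : U ⊆ U') (hV : V ⊆ V')
    (h : rk P s U V i ≠ 0) (he : rk P s U V i = rk P s U' V' i) :
    localSg P s pick i U V = localSg P s pick i U' V' := by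
  have hm := hpick _ (nonempty_of_rk P s h)
  have h1 := card_inter_mono P hU i
  have h2 := card_inter_mono P hV i
  have key : (U ∩ P i).card = (U' ∩ P i).card → (V ∩ P i).card = (V' ∩ P i).card →
      decide (pick ((U ∪ V) ∩ P i) ∈ U) = decide (pick ((U' ∪ V') ∩ P i) ∈ U') := by
    intro e1 e2
    have e1' := Finset.eq_of_subset_of_card_le
      (Finset.inter_subset_inter_right hU : U ∩ P i ⊆ U' ∩ P i) e1.ge
    have e2' := Finset.eq_of_subset_of_card_le
      (Finset.inter_subset_inter_right hV : V ∩ P i ⊆ V' ∩ P i) e2.ge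
    have e3 : (U' ∪ V') ∩ P i = (U ∪ V) ∩ P i := by
      rw [Finset.union_inter_distrib_right, Finset.union_inter_distrib_right, e1', e2']
    rw [e3]
    generalize pick ((U ∪ V) ∩ P i) = x at hm
    have hx := (Finset.mem_inter.1 hm).2
    have : x ∈ U ↔ x ∈ U' := by
      have := congrArg (x ∈ ·) e1'
      simpa [hx] using this
    simp [this]
  unfold rk clipC at he
  unfold localSg
  split_ifs at he with ha hb hb
  · rw [if_neg (by omega), if_neg (by omega), if_neg (by omega), if_neg (by omega)]
    exact key (by omega) (by omega)
  · omega
  · omega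
  · by_cases c1 : s i ≤ (U ∩ P i).card ∧ (V ∩ P i).card < s i
    · rw [if_pos c1, if_pos (by omega)]
    · by_cases c2 : (U ∩ P i).card < s i ∧ s i ≤ (V ∩ P i).card
      · rw [if_neg c1, if_pos c2, if_neg (by omega), if_pos (by omega)]
      · rw [if_neg c1, if_neg c2, if_neg (by omega), if_neg (by omega)]
        exact key (by omega) (by omega)

lemma exists_vert (hP : IsPartition n m P) (k : ℕ) (U : Finset (Fin n))
    (h : k ≤ clipSum P s U) : ∃ A ∈ multiKneserVerts n m k P s, A ⊆ U := by
  have : ∀ i, ∃ D ⊆ U ∩ P i, D.card = clipC P s U i := fun i =>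
    Finset.exists_subset_card_eq (min_le_left _ _)
  choose D hD hDc using this
  have hc : (Finset.univ.biUnion D).card = clipSum P s U := by
    rw [Finset.card_biUnion]
    · exact Finset.sum_congr rfl (fun i _ => hDc i)
    · intro i _ j _ hij
      exact (hP.2.1 i j hij).mono ((hD i).trans Finset.inter_subset_right)
        ((hD j).trans Finset.inter_subset_right)
  obtain ⟨A, hA, hAc⟩ := Finset.exists_subset_card_eq (h.trans hc.ge)
  refine ⟨A, ?_, ?_⟩
  · unfold multiKneserVerts
    rw [Finset.mem_filter]
    refine ⟨Finset.mem_univ _, hAc, fun i => ?_⟩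
    refine (Finset.card_le_card (t := D i) ?_).trans ((hDc i).le.trans (min_le_right _ _))
    intro x hx
    rw [Finset.mem_inter] at hx
    obtain ⟨j, _, hj⟩ := Finset.mem_biUnion.1 (hA hx.1)
    by_cases hij : i = j
    · subst hij; exact hj
    · exact absurd (Finset.mem_inter.1 (hD j hj)).2 (Finset.disjoint_left.1 (hP.2.1 i j hij) hx.2)
  · intro x hx
    obtain ⟨j, _, hj⟩ := Finset.mem_biUnion.1 (hA hx)
    exact (Finset.mem_inter.1 (hD j hj)).1

lemma rk_sum_pos (hP : IsPartition n m P) (hs : ∀ i, 1 ≤ s i) {U V : Finset (Fin n)}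
    (h : (U ∪ V).Nonempty) : ∃ i, rk P s U V i ≠ 0 := by
  obtain ⟨x, hx⟩ := h
  obtain ⟨i, hi⟩ := hP.2.2 x
  refine ⟨i, ?_⟩
  have := hs i
  rcases Finset.mem_union.1 hx with hx | hx
  · have : 0 < (U ∩ P i).card := Finset.card_pos.2 ⟨x, Finset.mem_inter.2 ⟨hx, hi⟩⟩
    unfold rk clipC; split_ifs <;> omega
  · have : 0 < (V ∩ P i).card := Finset.card_pos.2 ⟨x, Finset.mem_inter.2 ⟨hx, hi⟩⟩
    unfold rk clipC; split_ifs <;> omega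

lemma rk_sum_le (k M : ℕ)
    (hM : ∀ S : Finset (Fin m), (∑ i ∈ S, frpi n m 2 P s i) ≤ 2 * k - 1 →
      2 * k - 1 + ∑ i ∈ S, ((P i).card - frpi n m 2 P s i) ≤ M)
    {U V : Finset (Fin n)} (hd : Disjoint U V) (hU : clipSum P s U < k) (hV : clipSum P s V < k) :
    ∑ i, rk P s U V i + 1 ≤ M := by
  classical
  set S : Finset (Fin m) := Finset.univ.filter
    (fun i => s i ≤ (U ∩ P i).card ∧ s i ≤ (V ∩ P i).card) with hS
  have hpc : ∀ i, (U ∩ P i).card + (V ∩ P i).card ≤ (P i).card := by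
    intro i
    rw [← Finset.card_union_of_disjoint (hd.mono Finset.inter_subset_left Finset.inter_subset_left)]
    exact Finset.card_le_card (Finset.union_subset Finset.inter_subset_right Finset.inter_subset_right)
  have hf : ∀ i ∈ S, frpi n m 2 P s i = clipC P s U i + clipC P s V i := by
    intro i hi
    have h1 := (Finset.mem_filter.1 hi).2
    have := hpc i
    unfold frpi clipC
    rw [if_pos (by omega)]
    omega
  have htot : ∑ i, (clipC P s U i + clipC P s V i) + 2 ≤ 2 * k := by
    rw [Finset.sum_add_distrib]
    unfold clipSum at hU hV
    omega
  have h1 := hM S (by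
    rw [Finset.sum_congr rfl hf]
    have := Finset.sum_le_sum_of_subset (f := fun i => clipC P s U i + clipC P s V i)
      (Finset.subset_univ S)
    omega)
  have h2 : ∑ i, rk P s U V i ≤ ∑ i, (clipC P s U i + clipC P s V i) +
      ∑ i ∈ S, ((P i).card - frpi n m 2 P s i) := by
    rw [hS, Finset.sum_filter, ← Finset.sum_add_distrib]
    apply Finset.sum_le_sum
    intro i _
    have := hpc i
    by_cases h : s i ≤ (U ∩ P i).card ∧ s i ≤ (V ∩ P i).card
    · rw [if_pos h, hf i (Finset.mem_filter.2 ⟨Finset.mem_univ _, h⟩)]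
      unfold rk; rw [if_pos h]; omega
    · unfold rk; rw [if_neg h, if_neg h]; omega
  omega

set_option maxHeartbeats 2000000 in
lemma coloring_lower (k : ℕ) (hn : 1 ≤ n) (hm : 1 ≤ m) (hk : 1 ≤ k) (hP : IsPartition n m P)
    (hs : ∀ i, 1 ≤ s i) (M : ℕ)
    (hM : ∀ S : Finset (Fin m), (∑ i ∈ S, frpi n m 2 P s i) ≤ 2 * k - 1 →
      2 * k - 1 + ∑ i ∈ S, ((P i).card - frpi n m 2 P s i) ≤ M)
    (t : ℕ) (ht : 1 ≤ t) (c : Finset (Fin n) → ℕ)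
    (hc : IsKneserColoring n 2 t (multiKneserVerts n m k P s) c) : n + 1 ≤ M + t := by
  classical
  have hM1 : 1 ≤ M := by have := hM ∅ (by simp); simp at this; omega
  have hpick : ∃ pick : Finset (Fin n) → Fin n, ∀ A, A.Nonempty → pick A ∈ A :=
    ⟨fun A => if h : A.Nonempty then h.choose else ⟨0, hn⟩, fun A h => by
      simp only [dif_pos h]; exact h.choose_spec⟩
  obtain ⟨pick, hpick⟩ := hpick
  have hpickI : ∃ pick : Finset (Fin m) → Fin m, ∀ A, A.Nonempty → pick A ∈ A :=
    ⟨fun A => if h : A.Nonempty then h.choose else ⟨0, hm⟩, fun A h => by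
      simp only [dif_pos h]; exact h.choose_spec⟩
  obtain ⟨pickI, hpickI⟩ := hpickI
  set F := multiKneserVerts n m k P s with hF
  set C := clipSum P s with hC
  set I : Finset (Fin n) → Finset (Fin n) → Finset (Fin m) :=
    fun U V => Finset.univ.filter (fun i => rk P s U V i ≠ 0) with hI
  set sg0 : Finset (Fin n) → Finset (Fin n) → Bool :=
    fun U V => localSg P s pick (pickI (I U V)) U V with hsg0
  set K : Finset (Fin n) → ℕ := fun U => (F.filter (· ⊆ U)).sup c with hK
  have hKmono : ∀ {U U'}, U ⊆ U' → K U ≤ K U' := by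
    intro U U' h
    apply Finset.sup_mono
    intro A hA
    rw [Finset.mem_filter] at hA ⊢
    exact ⟨hA.1, hA.2.trans h⟩
  have hKt : ∀ U, K U ≤ t := by
    intro U
    apply Finset.sup_le
    intro A hA
    exact (Finset.mem_Icc.1 (hc.1 A (Finset.mem_filter.1 hA).1)).2
  have hKmem : ∀ U, k ≤ C U → ∃ A ∈ F, A ⊆ U ∧ c A = K U := by
    intro U hU
    obtain ⟨A, hA, hAU⟩ := exists_vert P s hP k U hU
    obtain ⟨B, hB, hBe⟩ := Finset.exists_mem_eq_sup (F.filter (· ⊆ U))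
      ⟨A, Finset.mem_filter.2 ⟨hA, hAU⟩⟩ c
    rw [Finset.mem_filter] at hB
    exact ⟨B, hB.1, hB.2, hBe.symm⟩
  have hK1 : ∀ U, k ≤ C U → 1 ≤ K U := by
    intro U hU
    obtain ⟨A, hA, _, he⟩ := hKmem U hU
    rw [← he]
    exact (Finset.mem_Icc.1 (hc.1 A hA)).1
  have hKne : ∀ U V, Disjoint U V → k ≤ C U → k ≤ C V → K U ≠ K V := by
    intro U V hd hU hV he
    obtain ⟨A, hA, hAU, hAe⟩ := hKmem U hU
    obtain ⟨B, hB, hBV, hBe⟩ := hKmem V hV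
    have hAB : Disjoint A B := hd.mono hAU hBV
    have hne : A ≠ B := by
      rintro rfl
      have h0 : A = ∅ := by simpa using hAB
      have h1 := (Finset.mem_filter.1 hA).2.1
      rw [h0] at h1
      simp at h1
      omega
    refine hc.2 {A, B} ?_ (Finset.card_pair hne) ?_ ⟨K U, ?_⟩
    · intro X hX
      rcases Finset.mem_insert.1 hX with rfl | hX
      · exact hA
      · rw [Finset.mem_singleton.1 hX]; exact hB
    · intro X hX Y hY hXY
      simp only [Finset.coe_insert, Finset.coe_singleton, Set.mem_insert_iff,
        Set.mem_singleton_iff] at hX hY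
      rcases hX with rfl | rfl <;> rcases hY with rfl | rfl
      · exact absurd rfl hXY
      · exact hAB
      · exact hAB.symm
      · exact absurd rfl hXY
    · intro X hX
      rcases Finset.mem_insert.1 hX with rfl | hX
      · exact hAe
      · rw [Finset.mem_singleton.1 hX, hBe, he]
  set lev : Finset (Fin n) → Finset (Fin n) → ℕ := fun U V =>
    if k ≤ C U ∧ k ≤ C V then M + max (K U) (K V) - 2
    else if k ≤ C U ∨ k ≤ C V then M - 1 else (∑ i, rk P s U V i) - 1 with hlev
  set sg : Finset (Fin n) → Finset (Fin n) → Bool := fun U V =>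
    if k ≤ C U ∧ k ≤ C V then decide (K V < K U)
    else if k ≤ C U ∨ k ≤ C V then decide (k ≤ C U) else sg0 U V with hsg
  have hhigh : ∀ U V, Disjoint U V → k ≤ C U → k ≤ C V → 2 ≤ max (K U) (K V) := by
    intro U V hd hU hV
    have := hKne U V hd hU hV
    have := hK1 U hU
    have := hK1 V hV
    omega
  have hlow : ∀ U V, Disjoint U V → ¬ k ≤ C U → ¬ k ≤ C V → ∑ i, rk P s U V i + 1 ≤ M :=
    fun U V hd hU hV => rk_sum_le P s k M hM hd (not_le.1 hU) (not_le.1 hV)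
  have hpos : ∀ U V, (U ∪ V).Nonempty → 1 ≤ ∑ i, rk P s U V i := by
    intro U V h
    obtain ⟨i, hi⟩ := rk_sum_pos P s hP hs h
    exact (Nat.one_le_iff_ne_zero.2 hi).trans
      (Finset.single_le_sum (f := fun i => rk P s U V i) (fun _ _ => Nat.zero_le _) (Finset.mem_univ i))
  have hIne : ∀ U V, (U ∪ V).Nonempty → (I U V).Nonempty := by
    intro U V h
    obtain ⟨i, hi⟩ := rk_sum_pos P s hP hs h
    exact ⟨i, Finset.mem_filter.2 ⟨Finset.mem_univ _, hi⟩⟩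
  have main := octahedral_tucker (α := Fin n) (M + t - 1) lev sg ?_ ?_ ?_ ?_
  · rw [Fintype.card_fin] at main; omega
  · intro U V hd hne
    simp only [hlev]
    have := hKt U
    have := hKt V
    split_ifs with h1 h2
    · have := hhigh U V hd h1.1 h1.2
      omega
    · omega
    · have := hlow U V hd (by tauto) (by tauto)
      omega
  · intro U V hd hne
    simp only [hlev]
    have e : ∑ i, rk P s V U i = ∑ i, rk P s U V i :=
      Finset.sum_congr rfl (fun i _ => rk_swap P s U V i)
    rw [e, max_comm (K V) (K U)]
    simp only [and_comm (a := k ≤ C V), or_comm (a := k ≤ C V)]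
  · intro U V hd hne
    simp only [hsg]
    simp only [and_comm (a := k ≤ C V), or_comm (a := k ≤ C V)]
    split_ifs with h1 h2
    · have := hKne U V hd h1.1 h1.2
      have : K U < K V ↔ ¬ (K V < K U) := by omega
      simp only [this, decide_not]
    · have : k ≤ C V ↔ ¬ (k ≤ C U) := by tauto
      simp only [this, decide_not]
    · simp only [hsg0]
      have e : I V U = I U V := by simp only [hI, rk_swap P s U V]
      rw [e]
      exact localSg_swap P s pick hpick hd (Finset.mem_filter.1 (hpickI _ (hIne U V hne))).2
  · intro U V U' V' hd' hU hV hne he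
    have hd := hd'.mono hU hV
    have hne' : (U' ∪ V').Nonempty := hne.mono (Finset.union_subset_union hU hV)
    have c1 : C U ≤ C U' := clipSum_mono P s hU
    have c2 : C V ≤ C V' := clipSum_mono P s hV
    have k1 := hKmono hU
    have k2 := hKmono hV
    have hh := hhigh U V hd
    have hh' := hhigh U' V' hd'
    have hl := hlow U V hd
    have hl' := hlow U' V' hd'
    have hp := hpos U V hne
    have hp' := hpos U' V' hne'
    simp only [hlev] at he
    simp only [hsg]
    by_cases a : k ≤ C U ∧ k ≤ C V
    · have a' : k ≤ C U' ∧ k ≤ C V' := by omega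
      rw [if_pos a, if_pos a'] at he
      rw [if_pos a, if_pos a']
      have := hh a.1 a.2
      have := hh' a'.1 a'.2
      have := hKne U V hd a.1 a.2
      have := hKne U' V' hd' a'.1 a'.2
      have : K V < K U ↔ K V' < K U' := by omega
      simp only [this]
    · rw [if_neg a] at he ⊢
      by_cases b : k ≤ C U ∨ k ≤ C V
      · rw [if_pos b] at he ⊢
        by_cases a' : k ≤ C U' ∧ k ≤ C V'
        · rw [if_pos a'] at he
          have := hh' a'.1 a'.2
          omega
        · rw [if_neg a', if_pos (by omega)]
          have : k ≤ C U ↔ k ≤ C U' := by omega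
          simp only [this]
      · have b1 : ¬ k ≤ C U := by tauto
        have b2 : ¬ k ≤ C V := by tauto
        have := hl b1 b2
        rw [if_neg b] at he ⊢
        by_cases a' : k ≤ C U' ∧ k ≤ C V'
        · rw [if_pos a'] at he
          have := hh' a'.1 a'.2
          omega
        · rw [if_neg a'] at he ⊢
          by_cases b' : k ≤ C U' ∨ k ≤ C V'
          · rw [if_pos b'] at he
            omega
          · rw [if_neg b'] at he ⊢
            have hsum : ∑ i, rk P s U V i = ∑ i, rk P s U' V' i := by omega
            have heq := (Finset.sum_eq_sum_iff_of_le
              (fun i _ => rk_mono P s hU hV i)).1 hsum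
            have heq' : ∀ i, rk P s U V i = rk P s U' V' i := fun i => heq i (Finset.mem_univ i)
            have e : I U' V' = I U V := by simp only [hI, heq']
            simp only [hsg0]
            rw [e]
            exact localSg_mono P s pick hpick hU hV
              (Finset.mem_filter.1 (hpickI _ (hIne U V hne))).2 (heq' _)

lemma frpi_le (i : Fin m) : frpi n m 2 P s i ≤ (P i).card := by
  unfold frpi; split_ifs <;> omega

lemma coloring_upper (k : ℕ) (hk : 1 ≤ k) (hP : IsPartition n m P)
    (S : Finset (Fin m)) (hS : (∑ i ∈ S, frpi n m 2 P s i) ≤ 2 * k - 1) :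
    ∃ c, IsKneserColoring n 2
      (n - (2 * k - 1 + ∑ i ∈ S, ((P i).card - frpi n m 2 P s i)) + 1)
      (multiKneserVerts n m k P s) c := by
  classical
  set U := S.biUnion P with hU
  have hUc : U.card = ∑ i ∈ S, (P i).card :=
    Finset.card_biUnion (fun i _ j _ hij => hP.2.1 i j hij)
  set w := 2 * k - 1 - ∑ i ∈ S, frpi n m 2 P s i with hw
  obtain ⟨W, hWU, hWc⟩ := Finset.exists_subset_card_eq (s := Uᶜ) (n := min (Uᶜ).card w)
    (min_le_left _ _)
  set R := (U ∪ W)ᶜ with hR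
  have hRc : R.card = n - (2 * k - 1 + ∑ i ∈ S, ((P i).card - frpi n m 2 P s i)) := by
    have hdj : Disjoint U W := by
      rw [Finset.disjoint_left]
      intro x hx hxW
      exact (Finset.mem_compl.1 (hWU hxW)) hx
    rw [hR, Finset.card_compl, Finset.card_union_of_disjoint hdj, hWc, Finset.card_compl,
      Fintype.card_fin, hUc, Finset.sum_tsub_distrib _ (fun i _ => frpi_le P s i)]
    have h1 : ∑ i ∈ S, frpi n m 2 P s i ≤ ∑ i ∈ S, (P i).card :=
      Finset.sum_le_sum (fun i _ => frpi_le P s i)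
    have h2 : U.card ≤ n := by simpa using Finset.card_le_univ U
    omega
  rw [← hRc]
  set g : Fin n → ℕ := fun a => if h : a ∈ R then (R.equivFin ⟨a, h⟩).val else 0 with hg
  have hginj : ∀ a ∈ R, ∀ b ∈ R, g a = g b → a = b := by
    intro a ha b hb h
    simp only [hg, dif_pos ha, dif_pos hb] at h
    have := R.equivFin.injective (Fin.ext h)
    simpa using this
  have hglt : ∀ a ∈ R, g a < R.card := by
    intro a ha
    simp only [hg, dif_pos ha]
    exact Fin.isLt _
  refine ⟨fun A => if h : (A ∩ R).Nonempty then g h.choose + 1 else R.card + 1, ?_, ?_⟩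
  · intro A _
    rw [Finset.mem_Icc]
    simp only
    split_ifs with h
    · have := hglt _ (Finset.mem_inter.1 h.choose_spec).2
      omega
    · omega
  · rintro E hE hE2 hpw ⟨col, hcol⟩
    obtain ⟨A, B, hAB, rfl⟩ := Finset.card_eq_two.1 hE2
    have hA := hE (Finset.mem_insert_self A {B})
    have hB := hE (Finset.mem_insert_of_mem (Finset.mem_singleton_self B))
    have hd : Disjoint A B := hpw (by simp) (by simp) hAB
    have hcA := hcol A (by simp)
    have hcB := hcol B (by simp)
    rw [← hcB] at hcA
    simp only at hcA
    split_ifs at hcA with h1 h2 h2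
    · have m1 := Finset.mem_inter.1 h1.choose_spec
      have m2 := Finset.mem_inter.1 h2.choose_spec
      have := hginj _ m1.2 _ m2.2 (by omega)
      exact Finset.disjoint_left.1 hd m1.1 (this ▸ m2.1)
    · have := hglt _ (Finset.mem_inter.1 h1.choose_spec).2
      omega
    · have := hglt _ (Finset.mem_inter.1 h2.choose_spec).2
      omega
    · have sub : ∀ X : Finset (Fin n), ¬ (X ∩ R).Nonempty → X ⊆ U ∪ W := by
        intro X hX x hx
        by_contra hxn
        exact hX ⟨x, Finset.mem_inter.2 ⟨hx, Finset.mem_compl.2 hxn⟩⟩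
      have hA' := (Finset.mem_filter.1 hA).2
      have hB' := (Finset.mem_filter.1 hB).2
      have hsub : A ∪ B ⊆ S.biUnion (fun i => (A ∪ B) ∩ P i) ∪ W := by
        intro x hx
        have := Finset.union_subset (sub A h1) (sub B h2) hx
        rcases Finset.mem_union.1 this with h | h
        · obtain ⟨i, hi, hxi⟩ := Finset.mem_biUnion.1 h
          exact Finset.mem_union_left _ (Finset.mem_biUnion.2 ⟨i, hi, Finset.mem_inter.2 ⟨hx, hxi⟩⟩)
        · exact Finset.mem_union_right _ h
      have q1 := (Finset.card_le_card hsub).trans (Finset.card_union_le _ _)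
      have q2 : (S.biUnion (fun i => (A ∪ B) ∩ P i)).card ≤ ∑ i ∈ S, frpi n m 2 P s i := by
        refine Finset.card_biUnion_le.trans (Finset.sum_le_sum ?_)
        intro i _
        have r1 : ((A ∪ B) ∩ P i).card ≤ (P i).card :=
          Finset.card_le_card Finset.inter_subset_right
        have r2 : ((A ∪ B) ∩ P i).card ≤ (A ∩ P i).card + (B ∩ P i).card := by
          rw [Finset.union_inter_distrib_right]; exact Finset.card_union_le _ _
        have r3 := hA'.2 i
        have r4 := hB'.2 i
        unfold frpi; split_ifs <;> omega
      rw [Finset.card_union_of_disjoint hd, hA'.1, hB'.1] at q1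
      omega

end Kneser

theorem stmt10 (n m k : ℕ) (hn : 1 ≤ n) (hm : 1 ≤ m) (hk : 1 ≤ k)
    (P : Fin m → Finset (Fin n)) (hP : IsPartition n m P)
    (s : Fin m → ℕ) (hs : ∀ i, 1 ≤ s i) (hsP : ∀ i, s i ≤ (P i).card)
    (hks : k ≤ ∑ i, s i) :
    kneserChrom n 2 (multiKneserVerts n m k P s) = max 1 (n - Mrpi n m 2 k P s + 1) := by
  classical
  set Z := {v | ∃ S : Finset (Fin m), (∑ i ∈ S, frpi n m 2 P s i) ≤ 2 * k - 1 ∧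
    v = 2 * k - 1 + ∑ i ∈ S, ((P i).card - frpi n m 2 P s i)} with hZ
  have hbdd : BddAbove Z := by
    refine ⟨2 * k - 1 + ∑ i, ((P i).card - frpi n m 2 P s i), ?_⟩
    rintro v ⟨S, _, rfl⟩
    exact Nat.add_le_add_left (Finset.sum_le_sum_of_subset (Finset.subset_univ S)) _
  have hne : Z.Nonempty := ⟨_, ∅, by simp, rfl⟩
  have hMd : Mrpi n m 2 k P s = sSup Z := rfl
  obtain ⟨S, hS, hSe⟩ := Nat.sSup_mem hne hbdd
  have hmax : max 1 (n - Mrpi n m 2 k P s + 1) = n - Mrpi n m 2 k P s + 1 := by omega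
  rw [hmax]
  unfold kneserChrom
  obtain ⟨c0, hc0⟩ := coloring_upper P s k hk hP S hS
  rw [← hSe, ← hMd] at hc0
  apply le_antisymm
  · exact Nat.sInf_le ⟨c0, hc0⟩
  · refine le_csInf ⟨_, c0, hc0⟩ ?_
    rintro t ⟨c, hc⟩
    have ht : 1 ≤ t := by
      obtain ⟨A, hA, _⟩ := exists_vert P s hP k Finset.univ (by
        refine hks.trans (Finset.sum_le_sum ?_)
        intro i _
        unfold clipC
        rw [Finset.univ_inter]
        exact le_min (hsP i) le_rfl)
      have := Finset.mem_Icc.1 (hc.1 A hA)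
      omega
    have := coloring_lower P s k hn hm hk hP hs (Mrpi n m 2 k P s)
      (fun S hS => le_csSup hbdd ⟨S, hS, rfl⟩) t ht c hc
    omega
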